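/- Let $P$ be a finite set of points and $L$ a finite set of affine lines in $\mathbb{R}^2$. If the containment incidence count $I(P, L) = |\{(p,\ell) \in P \times L : p \in \ell\}|$ satisfies $I(P,L) > C\left(|P|^{2/3}|L|^{2/3} + |P| + |L|\right)$ for the Szemerédi–Trotter constant $C$, then we have a contradiction; equivalently, $I(P,L) \le C(|P|^{2/3}|L|^{2/3} + |P| + |L|)$. -/

import Mathlib

/-!
The proof is Székely's, with every topological ingredient replaced by an elementary count of
non-vertical segments, each stored as a line `y = m x + c` over an interval `[l, r]`.

*Planar families.* A family of segments meeting only at common endpoints, all endpoints lying in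
`V`, has at most `4 |V|` members (`Seg.planar_card_le`). Each segment `e` falls in one of four
classes, each of which injects into `V`: `e` has the largest slope among those with its left
endpoint; or the least slope among those with its right endpoint; or the segment `f` following `e`
counterclockwise around their common left endpoint has the largest slope among those with the right
endpoint of `f`; or none of these. In the last case the
wedge between `e` and `f` contains an endpoint of another segment, and the leftmost such endpoint
sees `e` directly below it, hence determines `e`.

*Crossings.* Removing one segment from each crossing pair gives `|E| ≤ 4 |V| + |X|` for an arbitrary
family with set `X` of crossing pairs (`Seg.card_le_add_bad`). Applying this to a random subset of
`V` that keeps each vertex with probability `1 / k` gives `|E| k² ≤ 4 |V| k³ + |X|` for all real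
`k ≥ 1`, provided crossing pairs have four distinct endpoints (`Seg.crossing`).

*Incidences.* Let `E` consist of the segments joining consecutive points of `P` on lines of `L`.
Then `I(P, L) ≤ |E| + |L|`, and a crossing pair is determined by its two lines, so `|X| ≤ |L|²`.
The choice `k = |L|^(2/3) / |P|^(1/3) + 1` gives the bound (`inc_bound`). Vertical lines are treated
separately: a point lies on at most one of them, so they contribute at most `|P|` incidences.
-/

/-! ### Segments and crossings -/

/-- A non-vertical segment: the part of the line `y = m x + c` over `[l, r]`, where `l < r`. -/
@[ext] structure Seg where
  m : ℝ
  c : ℝ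
  l : ℝ
  r : ℝ
  hlt : l < r

namespace Seg

/-- The height at abscissa `x` of the line supporting the segment. -/
def y (s : Seg) (x : ℝ) : ℝ := s.m * x + s.c

/-- The left endpoint. -/
def lpt (s : Seg) : ℝ × ℝ := (s.l, s.y s.l)

/-- The right endpoint. -/
def rpt (s : Seg) : ℝ × ℝ := (s.r, s.y s.r)

/-- Two distinct segments share a point which is interior to at least one of them. This includes
overlaps and an endpoint of one lying inside the other, as well as proper crossings. -/
def Bad (e f : Seg) : Prop :=
  e ≠ f ∧ ∃ x, (e.l ≤ x ∧ x ≤ e.r) ∧ (f.l ≤ x ∧ x ≤ f.r) ∧ e.y x = f.y x ∧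
    ((e.l < x ∧ x < e.r) ∨ (f.l < x ∧ x < f.r))

/-- Distinct segments of the family meet only at common endpoints. -/
def Planar (E : Finset Seg) : Prop := ∀ e ∈ E, ∀ f ∈ E, ¬ Bad e f

/-- An affine function negative at `x₁` and nonnegative at `x₂` vanishes at `x₂` or strictly
between `x₁` and `x₂`, whatever the order of these two. -/
theorem exists_root {a b x₁ x₂ : ℝ} (h₁ : a * x₁ + b < 0) (h₂ : 0 ≤ a * x₂ + b) :
    ∃ x, a * x + b = 0 ∧ (x = x₂ ∧ a * x₂ + b = 0 ∨ x₁ < x ∧ x < x₂ ∨ x₂ < x ∧ x < x₁) := by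
  rcases h₂.eq_or_lt with h | h
  · exact ⟨x₂, h.symm, Or.inl ⟨rfl, h.symm⟩⟩
  have ha : a ≠ 0 := by rintro rfl; linarith
  have hx : a * (-b / a) = -b := by field_simp
  refine ⟨-b / a, by linarith, Or.inr ?_⟩
  generalize -b / a = x at hx
  rcases lt_or_gt_of_ne ha with ha | ha
  · right; constructor <;> by_contra! hc <;> nlinarith
  · left; constructor <;> by_contra! hc <;> nlinarith

/-- Segments that do not meet badly keep their vertical order over their common abscissae, up to
touching. -/
theorem keep_le {e f : Seg} (h : ¬ Bad e f) {x₁ x₂ : ℝ}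
    (e₁ : e.l ≤ x₁ ∧ x₁ ≤ e.r) (f₁ : f.l ≤ x₁ ∧ x₁ ≤ f.r)
    (e₂ : e.l ≤ x₂ ∧ x₂ ≤ e.r) (f₂ : f.l ≤ x₂ ∧ x₂ ≤ f.r)
    (hlt : e.y x₁ < f.y x₁) : e.y x₂ ≤ f.y x₂ := by
  by_contra! hc
  unfold y at hlt hc
  obtain ⟨x, hx, hx'⟩ := exists_root (a := e.m - f.m) (b := e.c - f.c) (x₁ := x₁) (x₂ := x₂)
    (by linarith) (by linarith)
  refine h ⟨by rintro rfl; exact lt_irrefl _ hlt, x, ?_⟩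
  unfold y
  rcases hx' with hx' | hx' | hx'
  · linarith
  · exact ⟨⟨by linarith, by linarith⟩, ⟨by linarith, by linarith⟩, by linarith,
      Or.inl ⟨by linarith, by linarith⟩⟩
  · exact ⟨⟨by linarith, by linarith⟩, ⟨by linarith, by linarith⟩, by linarith,
      Or.inl ⟨by linarith, by linarith⟩⟩

/-- The vertical order is kept strictly at an abscissa interior to one of the two segments, since
touching there is excluded. -/
theorem keep_lt {e f : Seg} (h : ¬ Bad e f) {x₁ x₂ : ℝ}
    (e₁ : e.l ≤ x₁ ∧ x₁ ≤ e.r) (f₁ : f.l ≤ x₁ ∧ x₁ ≤ f.r)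
    (e₂ : e.l ≤ x₂ ∧ x₂ ≤ e.r) (f₂ : f.l ≤ x₂ ∧ x₂ ≤ f.r)
    (hi : (e.l < x₂ ∧ x₂ < e.r) ∨ (f.l < x₂ ∧ x₂ < f.r))
    (hlt : e.y x₁ < f.y x₁) : e.y x₂ < f.y x₂ := by
  refine lt_of_le_of_ne (keep_le h e₁ f₁ e₂ f₂ hlt) fun heq => ?_
  exact h ⟨by rintro rfl; exact lt_irrefl _ hlt, x₂, e₂, f₂, heq, hi⟩

theorem Bad.symm {e f : Seg} (h : Bad e f) : Bad f e := by
  obtain ⟨hne, x, h1, h2, h3, h4⟩ := h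
  exact ⟨hne.symm, x, h2, h1, h3.symm, h4.symm⟩

/-- Two distinct segments with the same left endpoint and slope would overlap. -/
theorem eq_of_lpt {e f : Seg} (h : ¬ Bad e f) (hp : e.lpt = f.lpt) (hm : e.m = f.m) : e = f := by
  by_contra hne
  simp only [lpt, Prod.mk.injEq, y] at hp
  obtain ⟨hl, hy⟩ := hp
  have h1 := e.hlt
  have h2 := f.hlt
  have hc : e.c = f.c := by rw [hm, hl] at hy; linarith
  obtain ⟨x, hx, hx'⟩ := exists_between (lt_min h1 (hl ▸ h2))
  rw [lt_min_iff] at hx'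
  exact h ⟨hne, x, ⟨hx.le, hx'.1.le⟩, ⟨by linarith, hx'.2.le⟩, by simp [y, hm, hc],
    Or.inl ⟨hx, hx'.1⟩⟩

theorem eq_of_rpt {e f : Seg} (h : ¬ Bad e f) (hp : e.rpt = f.rpt) (hm : e.m = f.m) : e = f := by
  by_contra hne
  simp only [rpt, Prod.mk.injEq, y] at hp
  obtain ⟨hl, hy⟩ := hp
  have h1 := e.hlt
  have h2 := f.hlt
  have hc : e.c = f.c := by rw [hm, hl] at hy; linarith
  obtain ⟨x, hx, hx'⟩ := exists_between (max_lt h1 (hl ▸ h2))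
  rw [max_lt_iff] at hx
  exact h ⟨hne, x, ⟨hx.1.le, hx'.le⟩, ⟨hx.2.le, by linarith⟩, by simp [y, hm, hc],
    Or.inl ⟨hx.1, hx'⟩⟩

/-! ### Planar families of segments -/

/-- `f` follows `e` counterclockwise among the segments of `E` with the same left endpoint: it has
the least slope exceeding that of `e`. -/
def Next (E : Finset Seg) (e f : Seg) : Prop :=
  f ∈ E ∧ f.lpt = e.lpt ∧ e.m < f.m ∧ ∀ h ∈ E, h.lpt = e.lpt → e.m < h.m → f.m ≤ h.m

/-- `e` is the highest segment to the right of its left endpoint. -/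
def TopLeft (E : Finset Seg) (e : Seg) : Prop := ∀ h ∈ E, h.lpt = e.lpt → h.m ≤ e.m
/-- `e` is the highest segment to the left of its right endpoint, that is, the one with the least
slope. -/
def TopRight (E : Finset Seg) (e : Seg) : Prop := ∀ h ∈ E, h.rpt = e.rpt → e.m ≤ h.m
/-- `e` is the lowest segment to the left of its right endpoint. -/
def BotRight (E : Finset Seg) (e : Seg) : Prop := ∀ h ∈ E, h.rpt = e.rpt → h.m ≤ e.m

/-- `p` lies strictly between `e` (below) and `f` (above), to the right of the left endpoint of `e`
and to the left of both right endpoints. Used for `e` and `f` with the same left endpoint. -/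
def Wedge (e f : Seg) (p : ℝ × ℝ) : Prop :=
  e.l < p.1 ∧ p.1 < e.r ∧ p.1 < f.r ∧ e.y p.1 < p.2 ∧ p.2 < f.y p.1

theorem exists_next {E : Finset Seg} {e : Seg} (h : ¬ TopLeft E e) : ∃ f, Next E e f := by
  classical
  unfold TopLeft at h
  push Not at h
  obtain ⟨g, hg, hg1, hg2⟩ := h
  obtain ⟨f, hf, hmin⟩ := (E.filter fun h => h.lpt = e.lpt ∧ e.m < h.m).exists_min_image
    (fun h => h.m) ⟨g, by simp [hg, hg1, hg2]⟩
  simp only [Finset.mem_filter] at hf hmin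
  exact ⟨f, hf.1, hf.2.1, hf.2.2, fun h hE h1 h2 => hmin h ⟨hE, h1, h2⟩⟩

/-- Take the segment that arrives just inside the wedge at whichever of the right endpoints of `e`
and `f` comes first. It cannot leave the wedge through `e` or `f`, so it starts in the wedge. -/
theorem exists_wedge {E : Finset Seg} (hE : Planar E) {e f : Seg} (he : e ∈ E)
    (hn : Next E e f) (h1 : ¬ TopRight E e) (h2 : ¬ BotRight E f) :
    ∃ g ∈ E, Wedge e f g.lpt := by
  obtain ⟨hf, hl, hm, -⟩ := hn
  unfold TopRight at h1
  unfold BotRight at h2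
  push Not at h1 h2
  have he' := e.hlt
  have hf' := f.hlt
  simp only [lpt, Prod.mk.injEq] at hl
  obtain ⟨hl, hy⟩ := hl
  rw [hl] at hy
  rcases le_or_gt e.r f.r with hr | hr
  -- `e` ends first: some `g` arrives at its right endpoint from just above `e`.
  · obtain ⟨g, hg, hgr, hgm⟩ := h1
    simp only [rpt, Prod.mk.injEq] at hgr
    obtain ⟨hgr, hgy⟩ := hgr
    rw [hgr] at hgy
    have hg' := g.hlt
    have hgf : g.y e.r < f.y e.r := by
      unfold y at *; nlinarith
    have hgl : e.l < g.l := by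
      by_contra! hc
      have : f.y e.l < g.y e.l := by unfold y at *; nlinarith
      have := keep_le (hE f hf g hg) ⟨by linarith, by linarith⟩ ⟨by linarith, by linarith⟩
        (x₂ := e.r) ⟨by linarith, by linarith⟩ ⟨by linarith, by linarith⟩ this
      linarith
    refine ⟨g, hg, hgl, by simp only [lpt]; linarith, by simp only [lpt]; linarith, ?_, ?_⟩
    · simp only [lpt]; unfold y at *; nlinarith
    · exact keep_lt (hE g hg f hf) ⟨by linarith, by linarith⟩ ⟨by linarith, by linarith⟩
        ⟨by linarith, by linarith⟩ ⟨by linarith, by linarith⟩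
        (Or.inr ⟨by linarith, by linarith⟩) hgf
  -- `f` ends first: some `g` arrives at its right endpoint from just below `f`.
  · obtain ⟨g, hg, hgr, hgm⟩ := h2
    simp only [rpt, Prod.mk.injEq] at hgr
    obtain ⟨hgr, hgy⟩ := hgr
    rw [hgr] at hgy
    have hg' := g.hlt
    have hgf : e.y f.r < g.y f.r := by
      unfold y at *; nlinarith
    have hgl : e.l < g.l := by
      by_contra! hc
      have : g.y e.l < e.y e.l := by unfold y at *; nlinarith
      have := keep_le (hE g hg e he) ⟨by linarith, by linarith⟩ ⟨by linarith, by linarith⟩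
        (x₂ := f.r) ⟨by linarith, by linarith⟩ ⟨by linarith, by linarith⟩ this
      linarith
    refine ⟨g, hg, hgl, by simp only [lpt]; linarith, by simp only [lpt]; linarith, ?_, ?_⟩
    · exact keep_lt (hE e he g hg) (x₂ := g.l) ⟨by linarith, by linarith⟩ ⟨by linarith, by linarith⟩
        ⟨by linarith, by linarith⟩ ⟨by linarith, by linarith⟩
        (Or.inl ⟨by linarith, by linarith⟩) hgf
    · simp only [lpt]; unfold y at *; nlinarith

/-- `p` lies in the wedge between `e` and `f`, and no left endpoint of a segment of `E` in that
wedge is further to the left. -/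
def LeftmostWedge (E : Finset Seg) (e f : Seg) (p : ℝ × ℝ) : Prop :=
  Wedge e f p ∧ ∀ h ∈ E, Wedge e f h.lpt → p.1 ≤ h.l

theorem exists_leftmost {E : Finset Seg} (hE : Planar E) {e f : Seg} (he : e ∈ E)
    (hn : Next E e f) (h1 : ¬ TopRight E e) (h2 : ¬ BotRight E f) :
    ∃ g ∈ E, LeftmostWedge E e f g.lpt := by
  classical
  obtain ⟨g, hg, hw⟩ := exists_wedge hE he hn h1 h2
  obtain ⟨k, hk, hmin⟩ := (E.filter fun h => Wedge e f h.lpt).exists_min_image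
    (fun h => h.l) ⟨g, by simp [hg, hw]⟩
  simp only [Finset.mem_filter] at hk hmin
  exact ⟨k, hk.1, hk.2, fun h hE hw => hmin h ⟨hE, hw⟩⟩

/-- No other segment `h` passes between `e` and the leftmost point `p` of its wedge: followed to the
left, `h` would have to start inside the wedge, against the choice of `p`, or at the apex, against
the choice of `f`. -/
theorem leftmost_inj_aux {E : Finset Seg} (hE : Planar E) {e f h : Seg} {p : ℝ × ℝ} (he : e ∈ E)
    (hh : h ∈ E) (hn : Next E e f) (hp : LeftmostWedge E e f p)
    (h1 : h.l < p.1) (h2 : p.1 < h.r) (h3 : e.y p.1 ≤ h.y p.1) (h4 : h.y p.1 < p.2) : e = h := by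
  by_contra hne
  obtain ⟨hf, hl, hm, hnext⟩ := hn
  obtain ⟨⟨p1, p2, p3, p4, p5⟩, hmin⟩ := hp
  have hl0 := hl
  simp only [lpt, Prod.mk.injEq] at hl
  obtain ⟨hl, hy⟩ := hl
  rw [hl] at hy
  have he' := e.hlt
  have hf' := f.hlt
  have hh' := h.hlt
  have hlt : e.y p.1 < h.y p.1 := by
    refine lt_of_le_of_ne h3 fun heq => hE e he h hh ⟨hne, p.1, ⟨p1.le, p2.le⟩, ⟨h1.le, h2.le⟩,
      heq, Or.inl ⟨p1, p2⟩⟩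
  have hlt' : h.y p.1 < f.y p.1 := h4.trans p5
  -- The left endpoint of `h` is left of the apex, at its abscissa, or to the right of it.
  rcases lt_trichotomy h.l e.l with hc | hc | hc
  · have := keep_lt (hE e he h hh) (x₁ := p.1) (x₂ := e.l) ⟨by linarith, by linarith⟩
      ⟨by linarith, by linarith⟩ ⟨by linarith, by linarith⟩ ⟨by linarith, by linarith⟩
      (Or.inr ⟨by linarith, by linarith⟩) hlt
    have := keep_lt (hE h hh f hf) (x₁ := p.1) (x₂ := e.l) ⟨by linarith, by linarith⟩
      ⟨by linarith, by linarith⟩ ⟨by linarith, by linarith⟩ ⟨by linarith, by linarith⟩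
      (Or.inl ⟨by linarith, by linarith⟩) hlt'
    linarith
  · have a1 := keep_le (hE e he h hh) (x₁ := p.1) (x₂ := e.l) ⟨by linarith, by linarith⟩
      ⟨by linarith, by linarith⟩ ⟨by linarith, by linarith⟩ ⟨by linarith, by linarith⟩ hlt
    have a2 := keep_le (hE h hh f hf) (x₁ := p.1) (x₂ := e.l) ⟨by linarith, by linarith⟩
      ⟨by linarith, by linarith⟩ ⟨by linarith, by linarith⟩ ⟨by linarith, by linarith⟩ hlt'
    have hyy : h.y e.l = e.y e.l := by linarith
    have := hnext h hh (by simp [lpt, hc, hyy]) (by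
      unfold y at *; by_contra! hcc; nlinarith)
    unfold y at *; nlinarith
  · have a1 := keep_lt (hE e he h hh) (x₁ := p.1) (x₂ := h.l) ⟨by linarith, by linarith⟩
      ⟨by linarith, by linarith⟩ ⟨by linarith, by linarith⟩ ⟨by linarith, by linarith⟩
      (Or.inl ⟨by linarith, by linarith⟩) hlt
    have a2 := keep_lt (hE h hh f hf) (x₁ := p.1) (x₂ := h.l) ⟨by linarith, by linarith⟩
      ⟨by linarith, by linarith⟩ ⟨by linarith, by linarith⟩ ⟨by linarith, by linarith⟩
      (Or.inr ⟨by linarith, by linarith⟩) hlt'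
    have := hmin h hh ⟨hc, by simp only [lpt]; linarith, by simp only [lpt]; linarith, a1, a2⟩
    linarith

theorem leftmost_inj {E : Finset Seg} (hE : Planar E) {e f e' f' : Seg} {p : ℝ × ℝ} (he : e ∈ E)
    (he' : e' ∈ E) (hn : Next E e f) (hn' : Next E e' f') (hp : LeftmostWedge E e f p)
    (hp' : LeftmostWedge E e' f' p) : e = e' := by
  obtain ⟨a1, a2, a3, a4, a5⟩ := hp.1
  obtain ⟨b1, b2, b3, b4, b5⟩ := hp'.1
  rcases le_total (e.y p.1) (e'.y p.1) with h | h
  · exact leftmost_inj_aux hE he he' hn hp b1 b2 h b4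
  · exact (leftmost_inj_aux hE he' he hn' hp' a1 a2 h a4).symm

theorem next_inj {E : Finset Seg} (hE : Planar E) {e e' f : Seg} (he : e ∈ E) (he' : e' ∈ E)
    (hn : Next E e f) (hn' : Next E e' f) : e = e' := by
  have hl : e.lpt = e'.lpt := hn.2.1.symm.trans hn'.2.1
  refine eq_of_lpt (hE e he e' he') hl ?_
  rcases lt_trichotomy e.m e'.m with h | h | h
  · exact absurd (hn.2.2.2 e' he' hl.symm h) (not_le.2 hn'.2.2.1)
  · exact h
  · exact absurd (hn'.2.2.2 e he hl h) (not_le.2 hn.2.2.1)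

/-- A substitute for the linear edge bound that Euler's formula gives for planar graphs. -/
theorem planar_card_le {E : Finset Seg} (hE : Planar E) {V : Finset (ℝ × ℝ)}
    (hV : ∀ e ∈ E, e.lpt ∈ V ∧ e.rpt ∈ V) : E.card ≤ 4 * V.card := by
  classical
  have key : ∀ (Q : Seg → ℝ × ℝ → Prop),
      (∀ e ∈ E, ∀ e' ∈ E, ∀ p, Q e p → Q e' p → e = e') →
      (E.filter fun e => ∃ p ∈ V, Q e p).card ≤ V.card := by
    intro Q hQ
    have : ∀ e ∈ E.filter fun e => ∃ p ∈ V, Q e p, ∃ p, p ∈ V ∧ Q e p := fun e he =>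
      (Finset.mem_filter.1 he).2
    choose! φ hφ using this
    refine Finset.card_le_card_of_injOn φ (fun e he => (hφ e he).1) ?_
    intro e he e' he' hee
    have h1 := (hφ e he).2
    have h2 := (hφ e' he').2
    rw [← hee] at h2
    exact hQ e (Finset.mem_filter.1 he).1 e' (Finset.mem_filter.1 he').1 _ h1 h2
  have kA := key (fun e p => TopLeft E e ∧ e.lpt = p) (by
    rintro e he e' he' p ⟨h1, rfl⟩ ⟨h2, h3⟩
    exact eq_of_lpt (hE e he e' he') h3.symm (le_antisymm (h2 e he h3.symm) (h1 e' he' h3)))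
  have kB := key (fun e p => TopRight E e ∧ e.rpt = p) (by
    rintro e he e' he' p ⟨h1, rfl⟩ ⟨h2, h3⟩
    exact eq_of_rpt (hE e he e' he') h3.symm (le_antisymm (h1 e' he' h3) (h2 e he h3.symm)))
  have kC := key (fun e p => ∃ f, Next E e f ∧ BotRight E f ∧ f.rpt = p) (by
    rintro e he e' he' p ⟨f, hn, h1, rfl⟩ ⟨f', hn', h2, h3⟩
    have : f = f' := eq_of_rpt (hE f hn.1 f' hn'.1) h3.symm
      (le_antisymm (h2 f hn.1 h3.symm) (h1 f' hn'.1 h3))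
    subst this
    exact next_inj hE he he' hn hn')
  have kD := key (fun e p => ∃ f, Next E e f ∧ LeftmostWedge E e f p) (by
    rintro e he e' he' p ⟨f, hn, h1⟩ ⟨f', hn', h2⟩
    exact leftmost_inj hE he he' hn hn' h1 h2)
  refine (Finset.card_le_card (t := (_ ∪ _) ∪ (_ ∪ _)) ?_).trans
    (((Finset.card_union_le _ _).trans (add_le_add
      ((Finset.card_union_le _ _).trans (add_le_add kA kB))
      ((Finset.card_union_le _ _).trans (add_le_add kC kD)))).trans (by omega))
  intro e he
  simp only [Finset.mem_union, Finset.mem_filter, he, true_and]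
  by_cases hA : TopLeft E e
  · exact Or.inl (Or.inl ⟨_, (hV e he).1, hA, rfl⟩)
  by_cases hB : TopRight E e
  · exact Or.inl (Or.inr ⟨_, (hV e he).2, hB, rfl⟩)
  obtain ⟨f, hf⟩ := exists_next hA
  by_cases hC : BotRight E f
  · exact Or.inr (Or.inl ⟨_, (hV f hf.1).2, f, hf, hC, rfl⟩)
  obtain ⟨g, hg, hw⟩ := exists_leftmost hE he hf hB hC
  exact Or.inr (Or.inr ⟨_, (hV g hg).1, f, hf, hw⟩)

open Classical in
/-- Deleting the first member of every bad pair leaves a planar family. -/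
theorem card_le_add_bad (E : Finset Seg) {V : Finset (ℝ × ℝ)}
    (hV : ∀ e ∈ E, e.lpt ∈ V ∧ e.rpt ∈ V) :
    E.card ≤ 4 * V.card + ((E ×ˢ E).filter fun q => Bad q.1 q.2).card := by
  set X := (E ×ˢ E).filter fun q => Bad q.1 q.2 with hX
  have h1 : (E \ X.image Prod.fst).card ≤ 4 * V.card := by
    refine planar_card_le ?_ fun e he => hV e (Finset.mem_sdiff.1 he).1
    intro e he f hf hb
    rw [Finset.mem_sdiff] at he hf
    exact he.2 (Finset.mem_image.2 ⟨(e, f), by simp [hX, he.1, hf.1, hb], rfl⟩)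
  have h2 := Finset.le_card_sdiff (X.image Prod.fst) E
  have h3 : (X.image Prod.fst).card ≤ X.card := Finset.card_image_le
  omega

end Seg

/-! ### Random sampling and the crossing inequality -/

/-- Give `S ⊆ V` the weight `(k - 1) ^ (|V| - |S|)`. Dividing by `k ^ |V|`, this is the law of the
random subset that keeps each point independently with probability `1 / k`; a given `T` is kept with
probability `1 / k ^ |T|`. -/
theorem sum_weight {α : Type*} [DecidableEq α] {V T : Finset α} (hT : T ⊆ V) (k : ℝ) :
    (∑ S ∈ V.powerset with T ⊆ S, (k - 1) ^ (V.card - S.card)) * k ^ T.card = k ^ V.card := by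
  have h1 : V.powerset.filter (T ⊆ ·) = Finset.Icc T V := by
    ext S; simp [and_comm]
  have h2 := Finset.sum_pow_mul_eq_add_pow 1 (k - 1) (V \ T)
  rw [h1, Finset.Icc_eq_image_powerset hT, Finset.sum_image]
  · have hc := Finset.card_sdiff_add_card_eq_card hT
    have : ∀ R ∈ (V \ T).powerset, (k - 1) ^ (V.card - (T ∪ R).card)
        = 1 ^ R.card * (k - 1) ^ ((V \ T).card - R.card) := by
      intro R hR
      rw [Finset.mem_powerset, Finset.subset_sdiff] at hR
      rw [Finset.card_union_of_disjoint hR.2.symm, one_pow, one_mul]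
      congr 1
      omega
    rw [Finset.sum_congr rfl this, h2, ← hc, pow_add]
    simp
  · intro R hR R' hR' h
    simp only [Finset.coe_powerset, Set.mem_preimage, Set.mem_powerset_iff, Finset.coe_subset,
      Finset.subset_sdiff] at hR hR'
    have h' : (T ∪ R) \ T = (T ∪ R') \ T := congrArg (· \ T) h
    rwa [Finset.union_sdiff_cancel_left hR.2.symm,
      Finset.union_sdiff_cancel_left hR'.2.symm] at h'

/-- Expected number of surviving members of a family of `t`-element subsets of `V`. -/
theorem sum_weight_card {α ι : Type*} [DecidableEq α] {V : Finset α} (A : Finset ι)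
    (T : ι → Finset α) (t : ℕ) (hT : ∀ i ∈ A, T i ⊆ V ∧ (T i).card = t) (k : ℝ) :
    (∑ S ∈ V.powerset, (k - 1) ^ (V.card - S.card) * ((A.filter fun i => T i ⊆ S).card : ℝ))
      * k ^ t = A.card * k ^ V.card := by
  have h1 : ∀ S ∈ V.powerset,
      (k - 1) ^ (V.card - S.card) * ((A.filter fun i => T i ⊆ S).card : ℝ)
      = ∑ i ∈ A, if T i ⊆ S then (k - 1) ^ (V.card - S.card) else 0 := by
    intro S _
    rw [← Finset.sum_filter, Finset.sum_const, nsmul_eq_mul, mul_comm]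
  rw [Finset.sum_congr rfl h1, Finset.sum_comm, Finset.sum_mul, ← nsmul_eq_mul,
    ← Finset.sum_const]
  refine Finset.sum_congr rfl fun i hi => ?_
  rw [← Finset.sum_filter, ← (hT i hi).2]
  exact sum_weight (hT i hi).1 k

open Classical in
/-- A form of the crossing lemma, with the sampling probability `1 / k` left free. -/
theorem Seg.crossing (E : Finset Seg) {V : Finset (ℝ × ℝ)}
    (hV : ∀ e ∈ E, e.lpt ∈ V ∧ e.rpt ∈ V)
    (hX : ∀ e ∈ E, ∀ f ∈ E, Bad e f → ({e.lpt, e.rpt, f.lpt, f.rpt} : Finset (ℝ × ℝ)).card = 4)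
    {k : ℝ} (hk : 1 ≤ k) :
    (E.card : ℝ) * k ^ 2 ≤
      4 * V.card * k ^ 3 + ((E ×ˢ E).filter fun q => Bad q.1 q.2).card := by
  set X := (E ×ˢ E).filter fun q => Bad q.1 q.2 with hXdef
  have sE := sum_weight_card (V := V) E (fun e => {e.lpt, e.rpt}) 2 (by
    intro e he
    refine ⟨by simp [Finset.insert_subset_iff, hV e he], Finset.card_pair ?_⟩
    intro h
    exact e.hlt.ne (congrArg Prod.fst h)) k
  have sV := sum_weight_card (V := V) V (fun v => {v}) 1 (by simp) k
  have sX := sum_weight_card (V := V) X (fun q => {q.1.lpt, q.1.rpt, q.2.lpt, q.2.rpt}) 4 (by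
    rintro ⟨e, f⟩ hq
    simp only [hXdef, Finset.mem_filter, Finset.mem_product] at hq
    exact ⟨by simp [Finset.insert_subset_iff, hV e hq.1.1, hV f hq.1.2],
      hX e hq.1.1 f hq.1.2 hq.2⟩) k
  have hsum : ∀ S ∈ V.powerset,
      (k - 1) ^ (V.card - S.card)
        * ((E.filter fun e => ({e.lpt, e.rpt} : Finset (ℝ × ℝ)) ⊆ S).card : ℝ) ≤
      4 * ((k - 1) ^ (V.card - S.card)
        * ((V.filter fun v => ({v} : Finset (ℝ × ℝ)) ⊆ S).card : ℝ)) +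
      (k - 1) ^ (V.card - S.card) * ((X.filter fun q =>
        ({q.1.lpt, q.1.rpt, q.2.lpt, q.2.rpt} : Finset (ℝ × ℝ)) ⊆ S).card : ℝ) := by
    intro S hS
    rw [Finset.mem_powerset] at hS
    have hw : 0 ≤ (k - 1) ^ (V.card - S.card) := pow_nonneg (by linarith) _
    have h1 := card_le_add_bad (E.filter fun e => ({e.lpt, e.rpt} : Finset (ℝ × ℝ)) ⊆ S)
      (V := S) (by simp [Finset.insert_subset_iff])
    have h2 : (V.filter fun v => ({v} : Finset (ℝ × ℝ)) ⊆ S) = S := by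
      ext v; simpa using fun h => hS h
    have h3 : ((((E.filter fun e => ({e.lpt, e.rpt} : Finset (ℝ × ℝ)) ⊆ S) ×ˢ
        (E.filter fun e => ({e.lpt, e.rpt} : Finset (ℝ × ℝ)) ⊆ S)).filter
          fun q => Bad q.1 q.2)).card ≤ (X.filter fun q =>
        ({q.1.lpt, q.1.rpt, q.2.lpt, q.2.rpt} : Finset (ℝ × ℝ)) ⊆ S).card := by
      refine Finset.card_le_card ?_
      rintro ⟨e, f⟩
      simp only [hXdef, Finset.mem_filter, Finset.mem_product, Finset.insert_subset_iff,
        Finset.singleton_subset_iff]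
      tauto
    rw [h2]
    have h4 := (h1.trans (Nat.add_le_add_left h3 _))
    have h5 : ((E.filter fun e => ({e.lpt, e.rpt} : Finset (ℝ × ℝ)) ⊆ S).card : ℝ) ≤
        4 * (S.card : ℝ) + ((X.filter fun q =>
        ({q.1.lpt, q.1.rpt, q.2.lpt, q.2.rpt} : Finset (ℝ × ℝ)) ⊆ S).card : ℝ) := by
      exact_mod_cast h4
    calc _ ≤ _ := mul_le_mul_of_nonneg_left h5 hw
      _ = _ := by ring
  have h := Finset.sum_le_sum hsum
  rw [Finset.sum_add_distrib, ← Finset.mul_sum] at h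
  have hk0 : 0 < k := by linarith
  have hm := mul_le_mul_of_nonneg_right h (pow_pos hk0 4).le
  rw [add_mul, sX] at hm
  refine le_of_mul_le_mul_right ?_ (pow_pos hk0 V.card)
  calc _ = (E.card * k ^ V.card) * k ^ 2 := by ring
    _ = _ := by rw [← sE]; ring
    _ ≤ _ := hm
    _ = 4 * (V.card * k ^ V.card) * k ^ 3 + X.card * k ^ V.card := by rw [← sV]; ring
    _ = _ := by ring

/-! ### Incidences with non-vertical lines -/

open Classical in
/-- The incidences `(p, (m, c))` between points of `P` and non-vertical lines `y = m x + c`,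
the latter encoded by the pair `(m, c)`. -/
noncomputable def Inc (P L : Finset (ℝ × ℝ)) : Finset ((ℝ × ℝ) × (ℝ × ℝ)) :=
  (P ×ˢ L).filter fun q => q.1.2 = q.2.1 * q.1.1 + q.2.2

/-- `e` joins two points of `P` that are consecutive on a line of `L`. -/
structure IsEdge (P L : Finset (ℝ × ℝ)) (e : Seg) : Prop where
  line : (e.m, e.c) ∈ L
  left : e.lpt ∈ P
  right : e.rpt ∈ P
  gap : ∀ x, e.l < x → x < e.r → (x, e.y x) ∉ P

theorem finite_isEdge (P L : Finset (ℝ × ℝ)) : {e | IsEdge P L e}.Finite := by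
  refine Set.Finite.of_injOn (f := fun e : Seg => ((e.m, e.c), e.lpt, e.rpt))
    (t := ↑(L ×ˢ P ×ˢ P)) ?_ ?_ (Finset.finite_toSet _)
  · intro e he
    simp only [Finset.coe_product, Set.mem_prod, Finset.mem_coe]
    exact ⟨he.line, he.left, he.right⟩
  · intro e _ f _ h
    simp only [Prod.mk.injEq, Seg.lpt, Seg.rpt] at h
    exact Seg.ext h.1.1 h.1.2 h.2.1.1 h.2.2.1

/-- On a given line, an interior point of an edge belongs to no other edge. -/
theorem IsEdge.eq_of_mem {P L : Finset (ℝ × ℝ)} {e f : Seg} (he : IsEdge P L e)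
    (hf : IsEdge P L f) (hm : e.m = f.m) (hc : e.c = f.c) {x : ℝ} (h1 : e.l < x) (h2 : x < e.r)
    (h3 : f.l ≤ x) (h4 : x ≤ f.r) : e = f := by
  have hy : ∀ x, e.y x = f.y x := fun x => by simp [Seg.y, hm, hc]
  have a1 : f.l ≤ e.l := by
    by_contra! h
    exact he.gap f.l h (by linarith) (by rw [hy]; exact hf.left)
  have a2 : e.r ≤ f.r := by
    by_contra! h
    exact he.gap f.r (by linarith) h (by rw [hy]; exact hf.right)
  have a3 : e.l ≤ f.l := by
    by_contra! h
    exact hf.gap e.l h (by linarith) (by rw [← hy]; exact he.left)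
  have a4 : f.r ≤ e.r := by
    by_contra! h
    exact hf.gap e.r (by linarith) h (by rw [← hy]; exact he.right)
  exact Seg.ext hm hc (by linarith) (by linarith)

/-- Edges can only meet badly by crossing properly, on lines of different slopes. -/
theorem IsEdge.bad {P L : Finset (ℝ × ℝ)} {e f : Seg} (he : IsEdge P L e)
    (hf : IsEdge P L f) (h : Seg.Bad e f) :
    e.m ≠ f.m ∧ ∃ x, (e.l < x ∧ x < e.r) ∧ (f.l < x ∧ x < f.r) ∧ e.y x = f.y x := by
  obtain ⟨hne, x, h1, h2, h3, h4⟩ := h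
  have hmne : e.m ≠ f.m := by
    intro hm
    have hc : e.c = f.c := by simp only [Seg.y, hm] at h3; linarith
    rcases h4 with h4 | h4
    · exact hne (he.eq_of_mem hf hm hc h4.1 h4.2 h2.1 h2.2)
    · exact hne (hf.eq_of_mem he hm.symm hc.symm h4.1 h4.2 h1.1 h1.2).symm
  refine ⟨hmne, x, ?_⟩
  rcases h4 with h4 | h4
  · refine ⟨h4, ⟨lt_of_le_of_ne h2.1 ?_, lt_of_le_of_ne h2.2 ?_⟩, h3⟩
    · rintro rfl
      exact he.gap _ h4.1 h4.2 (by rw [h3]; exact hf.left)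
    · rintro rfl
      exact he.gap _ h4.1 h4.2 (by rw [h3]; exact hf.right)
  · refine ⟨⟨lt_of_le_of_ne h1.1 ?_, lt_of_le_of_ne h1.2 ?_⟩, h4, h3⟩
    · rintro rfl
      exact hf.gap _ h4.1 h4.2 (by rw [← h3]; exact he.left)
    · rintro rfl
      exact hf.gap _ h4.1 h4.2 (by rw [← h3]; exact he.right)

theorem Seg.meet_unique {e f : Seg} (hm : e.m ≠ f.m) {x x' : ℝ} (h : e.y x = f.y x)
    (h' : e.y x' = f.y x') : x = x' := by
  simp only [Seg.y] at h h'
  have : (e.m - f.m) * (x - x') = 0 := by linarith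
  rcases mul_eq_zero.1 this with h | h
  · exact absurd (sub_eq_zero.1 h) hm
  · linarith

theorem IsEdge.card_four {P L : Finset (ℝ × ℝ)} {e f : Seg} (he : IsEdge P L e)
    (hf : IsEdge P L f) (h : Seg.Bad e f) :
    ({e.lpt, e.rpt, f.lpt, f.rpt} : Finset (ℝ × ℝ)).card = 4 := by
  obtain ⟨hm, x, hx1, hx2, hx⟩ := he.bad hf h
  have he' := e.hlt
  have hf' := f.hlt
  have key : ∀ a b : ℝ, (a < x ∨ x < a) → ¬ (a = b ∧ e.y a = f.y b) := by
    rintro a b ha ⟨rfl, hab⟩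
    have := Seg.meet_unique hm hab hx
    rcases ha with ha | ha <;> linarith
  have k1 := key e.l f.l (Or.inl (by linarith))
  have k2 := key e.l f.r (Or.inl (by linarith))
  have k3 := key e.r f.l (Or.inr (by linarith))
  have k4 := key e.r f.r (Or.inr (by linarith))
  rw [Finset.card_insert_of_notMem, Finset.card_insert_of_notMem, Finset.card_pair]
  · simp [Seg.lpt, Seg.rpt, hf'.ne]
  · simp [Seg.lpt, Seg.rpt, -not_and, k3, k4]
  · simp [Seg.lpt, Seg.rpt, -not_and, he'.ne, k1, k2]

open Classical in
/-- A pair of lines determines the crossing point, and the crossing point determines the edge on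
each of the two lines. -/
theorem bad_card_le {P L : Finset (ℝ × ℝ)} {E : Finset Seg} (hE : ∀ e ∈ E, IsEdge P L e) :
    ((E ×ˢ E).filter fun q => Seg.Bad q.1 q.2).card ≤ L.card * L.card := by
  rw [← Finset.card_product]
  refine Finset.card_le_card_of_injOn (fun q => ((q.1.m, q.1.c), (q.2.m, q.2.c))) ?_ ?_
  · rintro ⟨e, f⟩ h
    simp only [Finset.coe_filter, Finset.mem_product, Set.mem_ofPred_eq] at h
    simp only [Finset.coe_product, Set.mem_prod, Finset.mem_coe]
    exact ⟨(hE e h.1.1).line, (hE f h.1.2).line⟩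
  · rintro ⟨e, f⟩ h ⟨e', f'⟩ h' heq
    simp only [Finset.coe_filter, Finset.mem_product, Set.mem_ofPred_eq] at h h'
    simp only [Prod.mk.injEq] at heq
    obtain ⟨⟨h1, h2⟩, h3, h4⟩ := heq
    obtain ⟨hm, x, hx1, hx2, hx⟩ := (hE e h.1.1).bad (hE f h.1.2) h.2
    obtain ⟨hm', x', hx1', hx2', hx'⟩ := (hE e' h'.1.1).bad (hE f' h'.1.2) h'.2
    have : x' = x := by
      refine Seg.meet_unique hm ?_ hx
      simpa only [Seg.y, h1, h2, h3, h4] using hx'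
    subst this
    rw [(hE e h.1.1).eq_of_mem (hE e' h'.1.1) h1 h2 hx1.1 hx1.2 hx1'.1.le hx1'.2.le,
      (hE f h.1.2).eq_of_mem (hE f' h'.1.2) h3 h4 hx2.1 hx2.2 hx2'.1.le hx2'.2.le]

/-- An incidence `(p, ℓ)` is charged to the edge on `ℓ` starting at `p`, or to `ℓ` if `p` is the
rightmost point of `P` on `ℓ`. -/
theorem inc_card_le {P L : Finset (ℝ × ℝ)} {E : Finset Seg} (hE : ∀ e, IsEdge P L e → e ∈ E) :
    (Inc P L).card ≤ E.card + L.card := by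
  classical
  have hmem : ∀ p ℓ, (p, ℓ) ∈ Inc P L ↔ p ∈ P ∧ ℓ ∈ L ∧ p.2 = ℓ.1 * p.1 + ℓ.2 := by
    intro p ℓ; simp [Inc, and_assoc]
  set A := (Inc P L).filter fun q => ∃ p ∈ P, (p, q.2) ∈ Inc P L ∧ q.1.1 < p.1 with hA
  have hc : (Inc P L).card = A.card + _ := (Finset.card_filter_add_card_filter_not _).symm
  have h1 : A.card ≤ E.card := by
    have : ∀ q ∈ A, ∃ e ∈ E, e.m = q.2.1 ∧ e.c = q.2.2 ∧ e.l = q.1.1 := by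
      rintro ⟨⟨a, b⟩, m, c⟩ hq
      simp only [hA, Finset.mem_filter, hmem] at hq
      obtain ⟨⟨hP, hL, hb⟩, hex⟩ := hq
      obtain ⟨p, hp, hmin⟩ := (P.filter fun p => p.2 = m * p.1 + c ∧ a < p.1).exists_min_image
        Prod.fst (by
          obtain ⟨p, hp, hp', hlt⟩ := hex
          exact ⟨p, by simp [hp, hp'.2.2, hlt]⟩)
      simp only [Finset.mem_filter] at hp hmin
      refine ⟨⟨m, c, a, p.1, hp.2.2⟩, hE _ ⟨hL, ?_, ?_, ?_⟩, rfl, rfl, rfl⟩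
      · simpa [Seg.lpt, Seg.y, ← hb] using hP
      · simpa [Seg.rpt, Seg.y, ← hp.2.1] using hp.1
      · intro x hx1 hx2 hx
        exact absurd (hmin _ ⟨hx, rfl, hx1⟩) (not_le.2 hx2)
    have hne : Nonempty Seg := ⟨⟨0, 0, 0, 1, one_pos⟩⟩
    choose! φ hφ using this
    refine Finset.card_le_card_of_injOn φ (fun q hq => (hφ q hq).1) ?_
    rintro ⟨⟨a, b⟩, m, c⟩ hq ⟨⟨a', b'⟩, m', c'⟩ hq' heq
    have g1 := (hφ _ hq).2
    have g2 := (hφ _ hq').2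
    rw [← heq] at g2
    have i1 := (hmem _ _).1 (Finset.mem_filter.1 hq).1
    have i2 := (hmem _ _).1 (Finset.mem_filter.1 hq').1
    simp only at g1 g2 i1 i2
    obtain ⟨m1, c1, l1⟩ := g1
    obtain ⟨m2, c2, l2⟩ := g2
    obtain rfl := m1.symm.trans m2
    obtain rfl := c1.symm.trans c2
    obtain rfl := l1.symm.trans l2
    rw [i1.2.2, i2.2.2]
  rw [hc]
  refine Nat.add_le_add h1 (Finset.card_le_card_of_injOn Prod.snd ?_ ?_)
  · rintro ⟨p, ℓ⟩ hq
    exact ((hmem _ _).1 (Finset.mem_filter.1 hq).1).2.1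
  · rintro ⟨⟨a, b⟩, m, c⟩ hq ⟨⟨a', b'⟩, m', c'⟩ hq' heq
    simp only [Prod.mk.injEq] at heq
    obtain ⟨rfl, rfl⟩ := heq
    simp only [Finset.coe_filter, Set.mem_ofPred_eq] at hq hq'
    have i1 := (hmem _ _).1 hq.1
    have i2 := (hmem _ _).1 hq'.1
    have j1 : a' ≤ a := by
      by_contra! h
      exact hq.2 ⟨_, i2.1, hq'.1, h⟩
    have j2 : a ≤ a' := by
      by_contra! h
      exact hq'.2 ⟨_, i1.1, hq.1, h⟩
    obtain rfl := le_antisymm j1 j2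
    have := i1.2.2
    have := i2.2.2
    simp_all

theorem inc_card_le_param (P L : Finset (ℝ × ℝ)) {k : ℝ} (hk : 1 ≤ k) :
    ((Inc P L).card : ℝ) * k ^ 2 ≤ 4 * P.card * k ^ 3 + (L.card : ℝ) ^ 2 + L.card * k ^ 2 := by
  classical
  set E := (finite_isEdge P L).toFinset with hEdef
  have hE : ∀ e, e ∈ E ↔ IsEdge P L e := by simp [hEdef]
  have h1 : ((Inc P L).card : ℝ) ≤ E.card + L.card := by
    exact_mod_cast inc_card_le fun e he => (hE e).2 he
  have h2 := Seg.crossing E (V := P) (fun e he => ⟨((hE e).1 he).left, ((hE e).1 he).right⟩)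
    (fun e he f hf h => ((hE e).1 he).card_four ((hE f).1 hf) h) hk
  have h3 : ((((E ×ˢ E).filter fun q => Seg.Bad q.1 q.2).card : ℕ) : ℝ) ≤ L.card * L.card := by
    exact_mod_cast bad_card_le fun e he => (hE e).1 he
  have h4 := mul_le_mul_of_nonneg_right h1 (sq_nonneg k)
  nlinarith

theorem inc_bound (P L : Finset (ℝ × ℝ)) :
    ((Inc P L).card : ℝ) ≤ 5 * ((P.card : ℝ) ^ ((2 : ℝ) / 3) * (L.card : ℝ) ^ ((2 : ℝ) / 3)) +
      4 * P.card + L.card := by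
  rcases P.eq_empty_or_nonempty with rfl | hP
  · simp [Inc]
  rcases L.eq_empty_or_nonempty with rfl | hL
  · simp [Inc]
  have hp : (0 : ℝ) < P.card := by exact_mod_cast hP.card_pos
  have hl : (0 : ℝ) < L.card := by exact_mod_cast hL.card_pos
  obtain ⟨a, ha, hpa⟩ : ∃ a : ℝ, 0 < a ∧ (P.card : ℝ) = a ^ 3 :=
    ⟨(P.card : ℝ) ^ ((1 : ℝ) / 3), by positivity, by
      rw [← Real.rpow_natCast, ← Real.rpow_mul hp.le]; norm_num⟩
  obtain ⟨b, hb, hlb⟩ : ∃ b : ℝ, 0 < b ∧ (L.card : ℝ) = b ^ 3 :=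
    ⟨(L.card : ℝ) ^ ((1 : ℝ) / 3), by positivity, by
      rw [← Real.rpow_natCast, ← Real.rpow_mul hl.le]; norm_num⟩
  have hroot : ∀ c : ℝ, 0 < c → (c ^ 3) ^ ((2 : ℝ) / 3) = c ^ 2 := by
    intro c hc
    rw [← Real.rpow_natCast, ← Real.rpow_mul hc.le, ← Real.rpow_natCast]; norm_num
  -- This `k` balances the terms `4 |P| k` and `|L|² / k²`; the `+ 1` ensures `k ≥ 1`.
  have hk : 1 ≤ b ^ 2 / a + 1 := by have : 0 < b ^ 2 / a := by positivity
                                    linarith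
  have h := inc_card_le_param P L hk
  rw [hpa, hlb] at h ⊢
  rw [hroot a ha, hroot b hb]
  have hak : a * (b ^ 2 / a + 1) = b ^ 2 + a := by field_simp
  generalize b ^ 2 / a + 1 = k at h hk hak
  have hk0 : 0 < k := by linarith
  refine le_of_mul_le_mul_right (h.trans ?_) (pow_pos hk0 2)
  have e1 : 4 * a ^ 3 * k ^ 3 = (4 * (a ^ 2 * b ^ 2) + 4 * a ^ 3) * k ^ 2 := by
    calc _ = 4 * a ^ 2 * k ^ 2 * (a * k) := by ring
      _ = _ := by rw [hak]; ring
  have e2 : (b ^ 3) ^ 2 ≤ a ^ 2 * b ^ 2 * k ^ 2 := by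
    calc (b ^ 3) ^ 2 = b ^ 2 * (b ^ 2) ^ 2 := by ring
      _ ≤ b ^ 2 * (b ^ 2 + a) ^ 2 := by gcongr; linarith
      _ = _ := by rw [← hak]; ring
  nlinarith

/-! ### Affine lines in the Euclidean plane -/

/-- A line of the plane is vertical or the graph of an affine function. -/
theorem line_form (ℓ : AffineSubspace ℝ (EuclideanSpace ℝ (Fin 2)))
    (h : Module.finrank ℝ ℓ.direction = 1) :
    (∃ a : ℝ, ∀ p, p ∈ ℓ ↔ p 0 = a) ∨ ∃ q : ℝ × ℝ, ∀ p, p ∈ ℓ ↔ p 1 = q.1 * p 0 + q.2 := by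
  obtain ⟨p₀, hp₀⟩ : (ℓ : Set (EuclideanSpace ℝ (Fin 2))).Nonempty := by
    rw [AffineSubspace.nonempty_iff_ne_bot]
    rintro rfl
    rw [AffineSubspace.direction_bot, finrank_bot] at h
    exact zero_ne_one h
  obtain ⟨⟨v, hv⟩, hv0, hspan⟩ := finrank_eq_one_iff'.1 h
  have hv0' : v ≠ 0 := fun h => hv0 (by simp [h])
  have hmem : ∀ p, p ∈ ℓ ↔ ∃ t : ℝ, t * v 0 = p 0 - p₀ 0 ∧ t * v 1 = p 1 - p₀ 1 := by
    intro p
    rw [← AffineSubspace.vsub_right_mem_direction_iff_mem hp₀]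
    constructor
    · intro hp
      obtain ⟨t, ht⟩ := hspan ⟨_, hp⟩
      have ht' : t • v = p -ᵥ p₀ := congrArg Subtype.val ht
      exact ⟨t, by simpa using congrArg (fun w => w 0) ht',
        by simpa using congrArg (fun w => w 1) ht'⟩
    · rintro ⟨t, h0, h1⟩
      have : p -ᵥ p₀ = t • v := by
        ext i; fin_cases i
        · simpa using h0.symm
        · simpa using h1.symm
      rw [this]
      exact ℓ.direction.smul_mem t hv
  by_cases h0 : v 0 = 0
  · have h1 : v 1 ≠ 0 := by
      intro h1
      apply hv0'
      ext i; fin_cases i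
      · simpa using h0
      · simpa using h1
    left
    refine ⟨p₀ 0, fun p => (hmem p).trans ⟨?_, ?_⟩⟩
    · rintro ⟨t, ht, -⟩
      rw [h0] at ht; linarith
    · intro hp
      exact ⟨(p 1 - p₀ 1) / v 1, by rw [h0, hp]; ring, by field_simp⟩
  · right
    refine ⟨(v 1 / v 0, p₀ 1 - v 1 / v 0 * p₀ 0), fun p => (hmem p).trans ⟨?_, ?_⟩⟩
    · rintro ⟨t, ht, ht'⟩
      have : v 1 / v 0 * (t * v 0) = t * v 1 := by field_simp
      rw [ht, ht'] at this
      linarith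
    · intro hp
      simp only at hp
      refine ⟨(p 0 - p₀ 0) / v 0, by field_simp, ?_⟩
      rw [hp]
      field_simp
      ring


/-- Szemerédi–Trotter: there is an absolute constant `C` so that for any finite set `P`
of points and finite set `L` of affine lines in the plane,
`I(P,L) ≤ C(|P|^{2/3}|L|^{2/3} + |P| + |L|)`. -/
theorem stmt_11 :
    ∃ C : ℝ, 0 < C ∧
      ∀ (P : Finset (EuclideanSpace ℝ (Fin 2)))
        (L : Finset (AffineSubspace ℝ (EuclideanSpace ℝ (Fin 2)))),
        (∀ ℓ ∈ L, Module.finrank ℝ ℓ.direction = 1) →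
        (({pq : EuclideanSpace ℝ (Fin 2) × AffineSubspace ℝ (EuclideanSpace ℝ (Fin 2)) |
            pq.1 ∈ P ∧ pq.2 ∈ L ∧ pq.1 ∈ pq.2}.ncard : ℝ)) ≤
          C * ((P.card : ℝ) ^ ((2 : ℝ) / 3) * (L.card : ℝ) ^ ((2 : ℝ) / 3) +
            (P.card : ℝ) + (L.card : ℝ)) := by
  classical
  refine ⟨5, by norm_num, fun P L hL => ?_⟩
  let ψ : EuclideanSpace ℝ (Fin 2) → ℝ × ℝ := fun p => (p 0, p 1)
  have hψ : Function.Injective ψ := by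
    intro p q h
    simp only [ψ, Prod.mk.injEq] at h
    ext i; fin_cases i
    · exact h.1
    · exact h.2
  set V := L.filter fun ℓ => ∃ a : ℝ, ∀ p, p ∈ ℓ ↔ p 0 = a with hV
  set N := L.filter fun ℓ => ¬ ∃ a : ℝ, ∀ p, p ∈ ℓ ↔ p 0 = a with hN
  have hform : ∀ ℓ ∈ N, ∃ q : ℝ × ℝ, ∀ p, p ∈ ℓ ↔ p 1 = q.1 * p 0 + q.2 := fun ℓ h =>
    (line_form ℓ (hL ℓ (Finset.mem_filter.1 h).1)).resolve_left (Finset.mem_filter.1 h).2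
  choose! φ hφ using hform
  have hφinj : Set.InjOn φ N := by
    intro ℓ hℓ ℓ' hℓ' h
    ext p
    rw [hφ ℓ hℓ, hφ ℓ' hℓ', h]
  have hset : {pq : EuclideanSpace ℝ (Fin 2) × AffineSubspace ℝ (EuclideanSpace ℝ (Fin 2)) |
      pq.1 ∈ P ∧ pq.2 ∈ L ∧ pq.1 ∈ pq.2} =
      ↑(((P ×ˢ V).filter fun pq => pq.1 ∈ pq.2) ∪ ((P ×ˢ N).filter fun pq => pq.1 ∈ pq.2)) := by
    ext ⟨p, ℓ⟩
    simp only [hV, hN, Set.mem_ofPred_eq, Finset.coe_union, Finset.coe_filter, Finset.mem_product,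
      Finset.mem_filter, Set.mem_union]
    tauto
  rw [hset, Set.ncard_coe_finset]
  have h1 : ((P ×ˢ V).filter fun pq => pq.1 ∈ pq.2).card ≤ P.card := by
    refine Finset.card_le_card_of_injOn Prod.fst ?_ ?_
    · rintro ⟨p, ℓ⟩ h
      exact (Finset.mem_product.1 (Finset.mem_filter.1 h).1).1
    · rintro ⟨p, ℓ⟩ h ⟨p', ℓ'⟩ h' heq
      simp only at heq
      subst heq
      simp only [hV, Finset.coe_filter, Finset.mem_product, Finset.mem_filter,
        Set.mem_ofPred_eq] at h h'
      obtain ⟨⟨-, -, a, ha⟩, hp⟩ := h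
      obtain ⟨⟨-, -, a', ha'⟩, hp'⟩ := h'
      have : ℓ = ℓ' := by
        ext q
        rw [ha, ha', ← (ha p).1 hp, (ha' p).1 hp']
      rw [this]
  have h2 : ((P ×ˢ N).filter fun pq => pq.1 ∈ pq.2).card ≤
      (Inc (P.image ψ) (N.image φ)).card := by
    refine Finset.card_le_card_of_injOn (fun pq => (ψ pq.1, φ pq.2)) ?_ ?_
    · rintro ⟨p, ℓ⟩ h
      simp only [Finset.coe_filter, Finset.mem_product, Set.mem_ofPred_eq] at h
      simp only [Inc, Finset.coe_filter, Finset.mem_product, Set.mem_ofPred_eq]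
      exact ⟨⟨Finset.mem_image_of_mem _ h.1.1, Finset.mem_image_of_mem _ h.1.2⟩,
        (hφ ℓ h.1.2 p).1 h.2⟩
    · rintro ⟨p, ℓ⟩ h ⟨p', ℓ'⟩ h' heq
      simp only [Finset.coe_filter, Finset.mem_product, Set.mem_ofPred_eq] at h h'
      simp only [Prod.mk.injEq] at heq
      rw [hψ heq.1, hφinj h.1.2 h'.1.2 heq.2]
  have h3 := inc_bound (P.image ψ) (N.image φ)
  rw [Finset.card_image_of_injective _ hψ, Finset.card_image_of_injOn hφinj] at h3
  have h4 : (N.card : ℝ) ≤ L.card := by exact_mod_cast Finset.card_filter_le _ _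
  have h5 : (N.card : ℝ) ^ ((2 : ℝ) / 3) ≤ (L.card : ℝ) ^ ((2 : ℝ) / 3) :=
    Real.rpow_le_rpow (by positivity) h4 (by norm_num)
  have h6 : (P.card : ℝ) ^ ((2 : ℝ) / 3) * (N.card : ℝ) ^ ((2 : ℝ) / 3) ≤
      (P.card : ℝ) ^ ((2 : ℝ) / 3) * (L.card : ℝ) ^ ((2 : ℝ) / 3) :=
    mul_le_mul_of_nonneg_left h5 (by positivity)
  have h7 : ((((P ×ˢ V).filter fun pq => pq.1 ∈ pq.2) ∪
      ((P ×ˢ N).filter fun pq => pq.1 ∈ pq.2)).card : ℝ) ≤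
      P.card + (Inc (P.image ψ) (N.image φ)).card := by
    exact_mod_cast (Finset.card_union_le _ _).trans (Nat.add_le_add h1 h2)
  have h8 : (0 : ℝ) ≤ L.card := by positivity
  linarith
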